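/- arXiv:1002.1995 — 9 statements merged into one kernel-verified Lean document; each statement's English description precedes it below -/
import Mathlib

section
/- Let α > 0 and λ ∈ ℝ. Suppose u : ℝ × ℝ → ℝ and t ∈ ℝ are such that: (i) x ↦ u(x,t) is continuous, bounded, and twice differentiable on ℝ; (ii) for every x ∈ ℝ the partial derivative ∂ₜu(x,t) := d/ds u(x,s)|_{s=t} exists; (iii) for every x ∈ ℝ the equation ∂ₜu(x,t) - λ u(x,t) + λ α² ∫_ℝ u(y,t) · e^{-α|x-y|}/(2α) dy = 0 holds. Then x ↦ ∂ₜu(x,t) is twice differentiable on ℝ and for every x ∈ ℝ, ∂²/∂x² (∂ₜu)(x,t) - α² ∂ₜu(x,t) - λ ∂²/∂x² u(x,t) = 0. -/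
open MeasureTheory

lemma aux_intA (α : ℝ) (hα : 0 < α) (f : ℝ → ℝ) (hf : Continuous f) (M : ℝ)
    (hM : ∀ x, |f x| ≤ M) (x : ℝ) :
    IntegrableOn (fun y => f y * Real.exp (α * y)) (Set.Iic x) := by
  have h : IntegrableOn (fun y => Real.exp (α * y)) (Set.Iic x) := integrableOn_exp_mul_Iic hα x
  exact Integrable.bdd_mul h hf.aestronglyMeasurable
    (Filter.Eventually.of_forall (fun y => hM y))

lemma aux_intB (α : ℝ) (hα : 0 < α) (f : ℝ → ℝ) (hf : Continuous f) (M : ℝ)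
    (hM : ∀ x, |f x| ≤ M) (x : ℝ) :
    IntegrableOn (fun y => f y * Real.exp (-α * y)) (Set.Ioi x) := by
  have h : IntegrableOn (fun y => Real.exp (-α * y)) (Set.Ioi x) := exp_neg_integrableOn_Ioi x hα
  exact Integrable.bdd_mul h hf.aestronglyMeasurable
    (Filter.Eventually.of_forall (fun y => hM y))

lemma aux_derA (h : ℝ → ℝ) (hc : Continuous h) (hi : ∀ x, IntegrableOn h (Set.Iic x)) (x : ℝ) :
    HasDerivAt (fun x => ∫ y in Set.Iic x, h y) (h x) x := by
  have e : (fun x => ∫ y in Set.Iic x, h y)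
      = fun x => (∫ y in Set.Iic (0:ℝ), h y) + ∫ y in (0:ℝ)..x, h y := by
    funext z
    rw [← intervalIntegral.integral_Iic_sub_Iic (hi 0) (hi z)]; ring
  rw [e]
  exact (hc.integral_hasStrictDerivAt 0 x).hasDerivAt.const_add _

lemma aux_derB (h : ℝ → ℝ) (hc : Continuous h) (hi : ∀ x, IntegrableOn h (Set.Ioi x)) (x : ℝ) :
    HasDerivAt (fun x => ∫ y in Set.Ioi x, h y) (-h x) x := by
  have e : (fun x => ∫ y in Set.Ioi x, h y)
      = fun x => (∫ y in Set.Ioi (0:ℝ), h y) - ∫ y in (0:ℝ)..x, h y := by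
    funext z
    rw [← intervalIntegral.integral_Ioi_sub_Ioi' (hi 0) (hi z)]; ring
  rw [e]
  exact (hc.integral_hasStrictDerivAt 0 x).hasDerivAt.const_sub _

lemma aux_main (α : ℝ) (hα : 0 < α) (f : ℝ → ℝ) (hf : Continuous f) (M : ℝ)
    (hM : ∀ x, |f x| ≤ M) :
    ∃ J : ℝ → ℝ, 
      (∀ x, HasDerivAt (fun x => ∫ y : ℝ, f y * (Real.exp (-α * |x - y|) / (2 * α))) (J x) x) ∧
      ∀ x, HasDerivAt J
        (α ^ 2 * (∫ y : ℝ, f y * (Real.exp (-α * |x - y|) / (2 * α))) - f x) x := by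
  set A : ℝ → ℝ := fun x => ∫ y in Set.Iic x, f y * Real.exp (α * y) with hA
  set B : ℝ → ℝ := fun x => ∫ y in Set.Ioi x, f y * Real.exp (-α * y) with hB
  have hiA := aux_intA α hα f hf M hM
  have hiB := aux_intB α hα f hf M hM
  have dA : ∀ x, HasDerivAt A (f x * Real.exp (α * x)) x :=
    aux_derA _ (by fun_prop) hiA
  have dB : ∀ x, HasDerivAt B (-(f x * Real.exp (-α * x))) x :=
    aux_derB _ (by fun_prop) hiB
  have e : ∀ x, (∫ y : ℝ, f y * (Real.exp (-α * |x - y|) / (2 * α)))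
      = (Real.exp (-α * x) * A x + Real.exp (α * x) * B x) / (2 * α) := by
    intro x
    have e1 : Set.EqOn (fun y => f y * (Real.exp (-α * |x - y|) / (2 * α)))
        (fun y => (Real.exp (-α * x) / (2 * α)) * (f y * Real.exp (α * y))) (Set.Iic x) := by
      intro y hy
      have hy : y ≤ x := hy
      have : -α * |x - y| = -α * x + α * y := by
        rw [abs_of_nonneg (by linarith)]; ring
      simp only [this, Real.exp_add]; ring
    have e2 : Set.EqOn (fun y => f y * (Real.exp (-α * |x - y|) / (2 * α)))
        (fun y => (Real.exp (α * x) / (2 * α)) * (f y * Real.exp (-α * y))) (Set.Ioi x) := by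
      intro y hy
      have hy : x < y := hy
      have : -α * |x - y| = α * x + -α * y := by
        rw [abs_of_nonpos (by linarith)]; ring
      simp only [this, Real.exp_add]; ring
    rw [← intervalIntegral.integral_Iic_add_Ioi (b := x)
      (IntegrableOn.congr_fun (Integrable.const_mul (hiA x) _) e1.symm measurableSet_Iic)
      (IntegrableOn.congr_fun (Integrable.const_mul (hiB x) _) e2.symm measurableSet_Ioi),
      setIntegral_congr_fun measurableSet_Iic e1, setIntegral_congr_fun measurableSet_Ioi e2,
      integral_const_mul, integral_const_mul]
    simp only [hA, hB]; ring
  have dE : ∀ c x : ℝ, HasDerivAt (fun x => Real.exp (c * x)) (Real.exp (c * x) * c) x := by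
    intro c x
    simpa using ((hasDerivAt_id x).const_mul c).exp
  have ee : ∀ x, Real.exp (-α * x) * Real.exp (α * x) = 1 := by
    intro x; rw [← Real.exp_add]; simp
  simp only [e]
  refine ⟨fun x => (-(Real.exp (-α * x) * A x) + Real.exp (α * x) * B x) / 2, ?_, ?_⟩
  · intro x
    refine ((((dE (-α) x).mul (dA x)).add ((dE α x).mul (dB x))).div_const (2 * α)).congr_deriv ?_
    have := ee x
    field_simp
    ring
  · intro x
    refine ((((dE (-α) x).mul (dA x)).neg.add ((dE α x).mul (dB x))).div_const 2).congr_deriv ?_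
    have := ee x
    rw [neg_mul] at this
    field_simp
    linear_combination (-2 * f x) * this

theorem stmt_3 (α lam : ℝ) (hα : 0 < α) (u : ℝ → ℝ → ℝ) (t : ℝ)
    (hcont : Continuous (fun x => u x t))
    (hbdd : ∃ M : ℝ, ∀ x : ℝ, |u x t| ≤ M)
    (hdiff1 : ∀ x : ℝ, DifferentiableAt ℝ (fun x => u x t) x)
    (hdiff2 : ∀ x : ℝ, DifferentiableAt ℝ (deriv (fun x => u x t)) x)
    (ht : ∀ x : ℝ, DifferentiableAt ℝ (fun s => u x s) t)
    (heq : ∀ x : ℝ,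
      deriv (fun s => u x s) t - lam * u x t +
        lam * α ^ 2 * ∫ y : ℝ, u y t * (Real.exp (-α * |x - y|) / (2 * α)) = 0) :
    (∀ x : ℝ, DifferentiableAt ℝ (fun x => deriv (fun s => u x s) t) x) ∧
    (∀ x : ℝ, DifferentiableAt ℝ (deriv (fun x => deriv (fun s => u x s) t)) x) ∧
    (∀ x : ℝ,
      deriv (deriv (fun x => deriv (fun s => u x s) t)) x -
        α ^ 2 * deriv (fun s => u x s) t -
        lam * deriv (deriv (fun x => u x t)) x = 0) := by
  obtain ⟨M, hM⟩ := hbdd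
  obtain ⟨J, h1, h2⟩ := aux_main α hα (fun x => u x t) hcont M hM
  have ev : (fun x => deriv (fun s => u x s) t) = fun x => lam * u x t -
      lam * α ^ 2 * ∫ y : ℝ, u y t * (Real.exp (-α * |x - y|) / (2 * α)) := by
    funext x; linarith [heq x]
  have d1 : ∀ x, HasDerivAt (fun x => deriv (fun s => u x s) t)
      (lam * deriv (fun x => u x t) x - lam * α ^ 2 * J x) x := by
    intro x
    rw [ev]
    exact ((hdiff1 x).hasDerivAt.const_mul lam).sub ((h1 x).const_mul (lam * α ^ 2))
  have e1 : deriv (fun x => deriv (fun s => u x s) t) =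
      fun x => lam * deriv (fun x => u x t) x - lam * α ^ 2 * J x :=
    funext fun x => (d1 x).deriv
  have d2 := fun x => ((hdiff2 x).hasDerivAt.const_mul lam).sub ((h2 x).const_mul (lam * α ^ 2))
  refine ⟨fun x => (d1 x).differentiableAt, fun x => ?_, fun x => ?_⟩
  · rw [e1]; exact (d2 x).differentiableAt
  · have e2 := (d2 x).deriv
    rw [e1]
    refine Eq.trans (congrArg (fun z => z - α ^ 2 * deriv (fun s => u x s) t -
        lam * deriv (deriv (fun x => u x t)) x) e2) ?_
    linear_combination (-α ^ 2) * heq x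
end

section
/- Let α < 2 with α ≠ 0 and α ≠ 1, let ν > 1, and let t be a real number with t < ν. Then ∫_0^∞ (e^{t y} - 1 - (e^{y} - 1) t) · e^{-ν y} y^{-(1+α)} dy = Γ(-α) · ((ν - t)^α - ν^α + (ν^α - (ν - 1)^α) t), where Γ is the real Gamma function. -/
open MeasureTheory

/-- A finite combination of three exponentials. -/
noncomputable def expSum (c a : Fin 3 → ℝ) (y : ℝ) : ℝ := ∑ i, c i * Real.exp (-(a i) * y)

lemma expSum_hasDerivAt (c a : Fin 3 → ℝ) (y : ℝ) :
    HasDerivAt (expSum c a) (expSum (fun i => -(c i * a i)) a y) y := by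
  unfold expSum
  apply HasDerivAt.fun_sum
  intro i _
  have h := (((hasDerivAt_id y).const_mul (-(a i))).exp).const_mul (c i)
  refine h.congr_deriv ?_
  simp only [id, mul_one]
  ring

lemma expSum_continuous (c a : Fin 3 → ℝ) : Continuous (expSum c a) := by
  unfold expSum
  fun_prop

lemma expSum_top (c a : Fin 3 → ℝ) (ha : ∀ i, 0 < a i) (b : ℝ) :
    expSum c a =o[Filter.atTop] fun x : ℝ => x ^ b := by
  unfold expSum
  apply Asymptotics.IsLittleO.fun_sum
  intro i _
  exact (isLittleO_exp_neg_mul_rpow_atTop (ha i) b).const_mul_left _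

lemma expSum_integrable (c a : Fin 3 → ℝ) (ha : ∀ i, 0 < a i) (s b : ℝ)
    (hb : expSum c a =O[nhdsWithin 0 (Set.Ioi 0)] fun x : ℝ => x ^ (-b)) (hs : b < s) :
    IntegrableOn (fun t => t ^ (s - 1) * expSum c a t) (Set.Ioi 0) :=
  mellin_convergent_of_isBigO_scalar
    ((expSum_continuous c a).locallyIntegrable.locallyIntegrableOn _)
    (expSum_top c a ha (-(s + 1))).isBigO (by linarith) hb hs

lemma expSum_bot0 (c a : Fin 3 → ℝ) :
    expSum c a =O[nhdsWithin 0 (Set.Ioi 0)] fun x : ℝ => x ^ (-(0 : ℝ)) := by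
  simp only [neg_zero, Real.rpow_zero]
  exact (((expSum_continuous c a).tendsto 0).mono_left nhdsWithin_le_nhds).isBigO_one ℝ

lemma expSum_bot1 (c a : Fin 3 → ℝ) (h0 : ∑ i, c i = 0) :
    expSum c a =O[nhdsWithin 0 (Set.Ioi 0)] fun x : ℝ => x ^ (-(-1 : ℝ)) := by
  simp only [neg_neg, Real.rpow_one]
  have h := (expSum_hasDerivAt c a 0).isBigO_sub
  have h00 : expSum c a 0 = 0 := by simp [expSum, h0]
  simp only [h00, sub_zero] at h
  exact h.mono nhdsWithin_le_nhds

lemma expSum_bot2 (c a : Fin 3 → ℝ) (h0 : ∑ i, c i = 0) (h1 : ∑ i, c i * a i = 0) :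
    expSum c a =O[nhdsWithin 0 (Set.Ioi 0)] fun x : ℝ => x ^ (-(-2 : ℝ)) := by
  have e : expSum c a = fun y => ∑ i, c i * (Real.exp (-(a i) * y) - 1 - (-(a i) * y)) := by
    funext y
    unfold expSum
    have : ∑ i, c i * (Real.exp (-(a i) * y) - 1 - (-(a i) * y))
        = ∑ i, c i * Real.exp (-(a i) * y) - ∑ i, c i + y * ∑ i, c i * a i := by
      rw [Finset.mul_sum, ← Finset.sum_sub_distrib, ← Finset.sum_add_distrib]
      exact Finset.sum_congr rfl fun i _ => by ring
    rw [this, h0, h1]; ring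
  rw [e]
  apply Asymptotics.IsBigO.fun_sum
  intro i _
  apply Asymptotics.IsBigO.const_mul_left
  apply Asymptotics.IsBigO.of_bound ((a i) ^ 2)
  have hc : Filter.Tendsto (fun y : ℝ => |-(a i) * y|) (nhdsWithin 0 (Set.Ioi 0)) (nhds 0) := by
    have : Continuous (fun y : ℝ => |-(a i) * y|) := by fun_prop
    have h := this.tendsto 0
    simp only [mul_zero, abs_zero] at h
    exact h.mono_left nhdsWithin_le_nhds
  filter_upwards [hc.eventually (ge_mem_nhds one_pos)] with y hy
  have h := Real.abs_exp_sub_one_sub_id_le hy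
  have e2 : y ^ (-(-2 : ℝ)) = y ^ 2 := by
    rw [neg_neg]; exact_mod_cast Real.rpow_natCast y 2
  rw [e2, Real.norm_eq_abs, Real.norm_eq_abs, abs_of_nonneg (sq_nonneg y)]
  calc _ ≤ _ := h
    _ = _ := by ring

lemma expSum_L0 (c a : Fin 3 → ℝ) (ha : ∀ i, 0 < a i) (s : ℝ) (hs : 0 < s) :
    ∫ y in Set.Ioi (0 : ℝ), y ^ (s - 1) * expSum c a y
      = Real.Gamma s * ∑ i, c i * (a i) ^ (-s) := by
  have hi : ∀ i, ∫ y in Set.Ioi (0 : ℝ), y ^ (s - 1) * Real.exp (-(a i) * y)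
      = (a i) ^ (-s) * Real.Gamma s := by
    intro i
    have h := Real.integral_rpow_mul_exp_neg_mul_Ioi hs (ha i)
    simp only [neg_mul]
    rw [h, one_div, Real.inv_rpow (ha i).le, Real.rpow_neg (ha i).le]
  have hint : ∀ i, Integrable (fun y : ℝ => c i * (y ^ (s - 1) * Real.exp (-(a i) * y)))
      (volume.restrict (Set.Ioi 0)) := by
    intro i
    apply Integrable.const_mul
    refine mellin_convergent_of_isBigO_scalar (a := s + 1) (b := 0) ?_
      (isLittleO_exp_neg_mul_rpow_atTop (ha i) _).isBigO (by linarith) ?_ hs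
    · exact (by fun_prop : Continuous fun y : ℝ => Real.exp (-(a i) * y)).locallyIntegrable.locallyIntegrableOn _
    · simp only [neg_zero, Real.rpow_zero]
      exact (((by fun_prop : Continuous fun y : ℝ => Real.exp (-(a i) * y)).tendsto 0).mono_left
        nhdsWithin_le_nhds).isBigO_one ℝ
  have e : ∀ y : ℝ, y ^ (s - 1) * expSum c a y
      = ∑ i, c i * (y ^ (s - 1) * Real.exp (-(a i) * y)) := by
    intro y
    unfold expSum
    rw [Finset.mul_sum]
    exact Finset.sum_congr rfl fun i _ => by ring
  simp only [e]
  rw [integral_finsetSum _ fun i _ => hint i, Finset.mul_sum]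
  refine Finset.sum_congr rfl fun i _ => ?_
  rw [integral_const_mul, hi]; ring

lemma expSum_step (c a : Fin 3 → ℝ) (ha : ∀ i, 0 < a i) (s b : ℝ) (hs0 : s ≠ 0) (hs : b < s)
    (hb : expSum c a =O[nhdsWithin 0 (Set.Ioi 0)] fun x : ℝ => x ^ (-b))
    (hb' : expSum (fun i => -(c i * a i)) a =O[nhdsWithin 0 (Set.Ioi 0)]
      fun x : ℝ => x ^ (-(b + 1)))
    (H : ∫ y in Set.Ioi (0 : ℝ), y ^ (s + 1 - 1) * expSum (fun i => -(c i * a i)) a y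
      = Real.Gamma (s + 1) * ∑ i, -(c i * a i) * (a i) ^ (-(s + 1))) :
    ∫ y in Set.Ioi (0 : ℝ), y ^ (s - 1) * expSum c a y
      = Real.Gamma s * ∑ i, c i * (a i) ^ (-s) := by
  have i1 := expSum_integrable c a ha s b hb hs
  have i2 := expSum_integrable _ a ha (s + 1) (b + 1) hb' (by linarith)
  have key := integral_Ioi_mul_deriv_eq_deriv_mul (a := 0) (a' := 0) (b' := 0)
    (u := expSum c a) (u' := expSum (fun i => -(c i * a i)) a)
    (v := fun y : ℝ => y ^ s / s) (v' := fun y : ℝ => y ^ (s - 1))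
    (fun x _ => expSum_hasDerivAt c a x) ?_ ?_ ?_ ?_ ?_
  · have e1 : ∀ y : ℝ, y ^ (s - 1) * expSum c a y = expSum c a y * y ^ (s - 1) :=
      fun y => mul_comm _ _
    have e2 : ∀ y : ℝ, expSum (fun i => -(c i * a i)) a y * (y ^ s / s)
        = s⁻¹ * (y ^ (s + 1 - 1) * expSum (fun i => -(c i * a i)) a y) := by
      intro y; rw [add_sub_cancel_right]; ring
    simp only [e1]
    rw [key]
    simp only [e2]
    rw [integral_const_mul, H, Real.Gamma_add_one hs0]
    have e3 : ∑ i, -(c i * a i) * (a i) ^ (-(s + 1)) = - ∑ i, c i * (a i) ^ (-s) := by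
      rw [← Finset.sum_neg_distrib]
      refine Finset.sum_congr rfl fun i _ => ?_
      have : (a i) ^ (-s) = a i * (a i) ^ (-(s + 1)) := by
        rw [show -s = 1 + (-(s + 1)) by ring, Real.rpow_add (ha i), Real.rpow_one]
      rw [this]; ring
    rw [e3]
    field_simp
    ring
  · intro x hx
    have h := (Real.hasDerivAt_rpow_const (p := s) (Or.inl (ne_of_gt hx))).div_const s
    convert h using 1
    field_simp
  · refine i1.congr_fun (fun y _ => ?_) measurableSet_Ioi
    simp only [Pi.mul_apply]; ring
  · refine (i2.const_mul s⁻¹).congr (Filter.Eventually.of_forall fun y => ?_)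
    simp only [Pi.mul_apply, add_sub_cancel_right]; ring
  · have h : (expSum c a * fun y : ℝ => y ^ s / s) =O[nhdsWithin 0 (Set.Ioi 0)]
        fun x : ℝ => x ^ (s - b) := by
      have h1 : (fun y : ℝ => y ^ s / s) =O[nhdsWithin 0 (Set.Ioi 0)] fun y : ℝ => y ^ s := by
        simp only [div_eq_inv_mul]
        exact (Asymptotics.isBigO_refl _ _).const_mul_left _
      refine (hb.mul h1).congr' Filter.EventuallyEq.rfl ?_
      filter_upwards [self_mem_nhdsWithin] with x hx
      rw [← Real.rpow_add hx]; congr 1; ring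
    refine h.trans_tendsto ?_
    have h2 := (Real.continuousAt_rpow_const 0 (s - b) (Or.inr (by linarith))).tendsto
    rw [Real.zero_rpow (by linarith)] at h2
    exact h2.mono_left nhdsWithin_le_nhds
  · have h : (expSum c a * fun y : ℝ => y ^ s / s) =O[Filter.atTop]
        fun x : ℝ => x ^ (-1 : ℝ) := by
      have h1 : (fun y : ℝ => y ^ s / s) =O[Filter.atTop] fun y : ℝ => y ^ s := by
        simp only [div_eq_inv_mul]
        exact (Asymptotics.isBigO_refl _ _).const_mul_left _
      refine ((expSum_top c a ha (-s - 1)).isBigO.mul h1).congr' Filter.EventuallyEq.rfl ?_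
      filter_upwards [Filter.eventually_gt_atTop 0] with x hx
      rw [← Real.rpow_add hx]; congr 1; ring
    exact h.trans_tendsto (tendsto_rpow_neg_atTop one_pos)

lemma expSum_L1 (c a : Fin 3 → ℝ) (ha : ∀ i, 0 < a i) (s : ℝ) (hs : -1 < s) (hs0 : s ≠ 0)
    (h0 : ∑ i, c i = 0) :
    ∫ y in Set.Ioi (0 : ℝ), y ^ (s - 1) * expSum c a y
      = Real.Gamma s * ∑ i, c i * (a i) ^ (-s) := by
  refine expSum_step c a ha s (-1) hs0 hs (expSum_bot1 c a h0) ?_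
    (expSum_L0 _ a ha _ (by linarith))
  simpa using expSum_bot0 (fun i => -(c i * a i)) a

lemma expSum_L2 (c a : Fin 3 → ℝ) (ha : ∀ i, 0 < a i) (s : ℝ) (hs : -2 < s) (hs0 : s ≠ 0)
    (hs1 : s ≠ -1) (h0 : ∑ i, c i = 0) (h1 : ∑ i, c i * a i = 0) :
    ∫ y in Set.Ioi (0 : ℝ), y ^ (s - 1) * expSum c a y
      = Real.Gamma s * ∑ i, c i * (a i) ^ (-s) := by
  have h1' : ∑ i, -(c i * a i) = 0 := by rw [Finset.sum_neg_distrib, h1, neg_zero]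
  refine expSum_step c a ha s (-2) hs0 hs (expSum_bot2 c a h0 h1) ?_
    (expSum_L1 _ a ha _ (by linarith) (fun h => hs1 (by linarith)) h1')
  have := expSum_bot1 (fun i => -(c i * a i)) a h1'
  norm_num at this ⊢
  exact this

theorem stmt_9 (α ν t : ℝ) (hα : α < 2) (hα0 : α ≠ 0) (hα1 : α ≠ 1)
    (hν : 1 < ν) (ht : t < ν) :
    ∫ y in Set.Ioi (0 : ℝ),
        (Real.exp (t * y) - 1 - (Real.exp y - 1) * t) * Real.exp (-ν * y) * y ^ (-(1 + α)) =
      Real.Gamma (-α) * ((ν - t) ^ α - ν ^ α + (ν ^ α - (ν - 1) ^ α) * t) := by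
  have H := expSum_L2 ![1, t - 1, -t] ![ν - t, ν, ν - 1] ?_ (-α) (by linarith)
    (neg_ne_zero.mpr hα0) (fun h => hα1 (by linarith)) ?_ ?_
  · have e : ∀ y : ℝ,
        (Real.exp (t * y) - 1 - (Real.exp y - 1) * t) * Real.exp (-ν * y) * y ^ (-(1 + α))
        = y ^ (-α - 1) * expSum ![1, t - 1, -t] ![ν - t, ν, ν - 1] y := by
      intro y
      simp only [expSum, Fin.sum_univ_three, Matrix.cons_val]
      rw [show -(ν - t) * y = t * y + -ν * y by ring, show -(ν - 1) * y = y + -ν * y by ring,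
        Real.exp_add, Real.exp_add, show -(1 + α) = -α - 1 by ring]
      ring
    simp only [e]
    rw [H]
    simp only [Fin.sum_univ_three, Matrix.cons_val, neg_neg]
    ring
  · intro i
    fin_cases i <;> simp <;> linarith
  · simp [Fin.sum_univ_three]
  · simp [Fin.sum_univ_three]; ring
end

section
/- Let ν > 1 and let t be a real number with t < ν. Then ∫_0^∞ (e^{t y} - 1 - (e^{y} - 1) t) · e^{-ν y} y^{-1} dy = log ν - log(ν - t) + t · log((ν - 1)/ν). -/
open MeasureTheory

lemma frul_int (a b : ℝ) (ha : 0 < a) (hb : 0 < b) :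
    IntegrableOn (fun x : ℝ => x⁻¹ • (Real.exp (-(a * x)) - Real.exp (-(b * x)))) (Set.Ioi 0) := by
  have h1 : IntegrableOn (fun x : ℝ => |b - a| * (Real.exp (-a * x) + Real.exp (-b * x)))
      (Set.Ioi 0) :=
    ((exp_neg_integrableOn_Ioi 0 ha).add (exp_neg_integrableOn_Ioi 0 hb)).const_mul _
  refine Integrable.mono' h1 (by fun_prop) ?_
  refine (ae_restrict_iff' measurableSet_Ioi).2 (Filter.Eventually.of_forall fun x hx => ?_)
  have hx : 0 < x := hx
  have key : ∀ u v : ℝ, Real.exp u - Real.exp v ≤ (u - v) * Real.exp u := by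
    intro u v
    have h := Real.add_one_le_exp (v - u)
    have h2 : Real.exp v = Real.exp (v - u) * Real.exp u := by
      rw [← Real.exp_add]; congr 1; ring
    nlinarith [Real.exp_pos u]
  have e1 := key (-(a * x)) (-(b * x))
  have e2 := key (-(b * x)) (-(a * x))
  have p1 := Real.exp_pos (-(a * x))
  have p2 := Real.exp_pos (-(b * x))
  rw [smul_eq_mul, Real.norm_eq_abs, abs_mul, abs_of_pos (inv_pos.2 hx), inv_mul_le_iff₀ hx,
    neg_mul, neg_mul]
  generalize Real.exp (-(a * x)) = A at *
  generalize Real.exp (-(b * x)) = B at *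
  have q1 : (b - a) * (x * A) ≤ |b - a| * (x * A) :=
    mul_le_mul_of_nonneg_right (le_abs_self _) (by positivity)
  have q2 : -(b - a) * (x * B) ≤ |b - a| * (x * B) :=
    mul_le_mul_of_nonneg_right (neg_le_abs _) (by positivity)
  have q3 : 0 ≤ |b - a| * (x * A) := by positivity
  have q4 : 0 ≤ |b - a| * (x * B) := by positivity
  rw [abs_le]
  constructor <;> nlinarith

lemma frul_eq (a b : ℝ) (ha : 0 < a) (hb : 0 < b) :
    ∫ x in Set.Ioi (0 : ℝ), x⁻¹ • (Real.exp (-(a * x)) - Real.exp (-(b * x))) =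
      Real.log (b / a) := by
  have hc : Continuous (fun x : ℝ => Real.exp (-x)) := by fun_prop
  have h := Frullani.integral_Ioi_eq (f := fun x : ℝ => Real.exp (-x)) (L := 1) (R := 0)
    (hc.locallyIntegrable.locallyIntegrableOn _) ha hb
    (by simpa using (hc.tendsto 0).mono_left nhdsWithin_le_nhds)
    (Real.tendsto_exp_neg_atTop_nhds_zero) (frul_int a b ha hb)
  simpa using h

theorem stmt_10 (ν t : ℝ) (hν : 1 < ν) (ht : t < ν) :
    ∫ y in Set.Ioi (0 : ℝ),
        (Real.exp (t * y) - 1 - (Real.exp y - 1) * t) * Real.exp (-ν * y) * y⁻¹ =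
      Real.log ν - Real.log (ν - t) + t * Real.log ((ν - 1) / ν) := by
  have h0 : 0 < ν := by linarith
  have h1 : 0 < ν - t := by linarith
  have h2 : 0 < ν - 1 := by linarith
  have hfun : ∀ y : ℝ,
      (Real.exp (t * y) - 1 - (Real.exp y - 1) * t) * Real.exp (-ν * y) * y⁻¹ =
      y⁻¹ • (Real.exp (-((ν - t) * y)) - Real.exp (-(ν * y))) -
        t * (y⁻¹ • (Real.exp (-((ν - 1) * y)) - Real.exp (-(ν * y)))) := by
    intro y
    have e1 : Real.exp (-((ν - t) * y)) = Real.exp (t * y) * Real.exp (-(ν * y)) := by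
      rw [← Real.exp_add]; congr 1; ring
    have e2 : Real.exp (-((ν - 1) * y)) = Real.exp y * Real.exp (-(ν * y)) := by
      rw [← Real.exp_add]; congr 1; ring
    rw [e1, e2, neg_mul, smul_eq_mul, smul_eq_mul]
    ring
  simp_rw [hfun]
  rw [integral_sub (frul_int _ _ h1 h0) ((frul_int _ _ h2 h0).const_mul t), integral_const_mul,
    frul_eq _ _ h1 h0, frul_eq _ _ h2 h0, Real.log_div h0.ne' h1.ne', Real.log_div h0.ne' h2.ne',
    Real.log_div h2.ne' h0.ne']
  ring
end

section
/- Let ν > 1 and let t be a real number with t < ν. Then ∫_0^∞ (e^{t y} - 1 - (e^{y} - 1) t) · e^{-ν y} y^{-2} dy = -ν log ν + (ν - t) log(ν - t) + (ν log ν - (ν - 1) log(ν - 1)) · t. -/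
open MeasureTheory

lemma aux_pos (ν t s : ℝ) (hν : 1 < ν) (ht : t < ν) (h0 : 0 ≤ s) (h1 : s ≤ 1) : 0 < ν - s * t := by
  rcases le_or_gt t 0 with h | h
  · nlinarith [mul_nonneg h0 (neg_nonneg.2 h)]
  · nlinarith

lemma aux_y (ν t s : ℝ) (h : 0 < ν - s * t) :
    IntegrableOn (fun y : ℝ => t ^ 2 * (1 - s) * Real.exp (-(ν - s * t) * y)) (Set.Ioi 0) ∧
    ∫ y in Set.Ioi (0 : ℝ), t ^ 2 * (1 - s) * Real.exp (-(ν - s * t) * y) =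
      t ^ 2 * (1 - s) / (ν - s * t) := by
  constructor
  · exact (integrableOn_exp_mul_Ioi (by linarith) 0).const_mul _
  · rw [integral_const_mul, integral_exp_mul_Ioi (by linarith) 0]
    rw [mul_zero, Real.exp_zero, neg_div_neg_eq]
    ring

lemma aux_s (ν t y : ℝ) (hy : 0 < y) :
    ∫ s in Set.Ioc (0 : ℝ) 1, t ^ 2 * (1 - s) * Real.exp (-(ν - s * t) * y) =
      (Real.exp (t * y) - 1 - t * y) * Real.exp (-ν * y) * y ^ (-2 : ℤ) := by
  rw [← intervalIntegral.integral_of_le zero_le_one]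
  have hd : ∀ s ∈ Set.uIcc (0 : ℝ) 1, HasDerivAt
      (fun s : ℝ => (t * y * (1 - s) + 1) * Real.exp (-(ν - s * t) * y) * (y ^ 2)⁻¹)
      (t ^ 2 * (1 - s) * Real.exp (-(ν - s * t) * y)) s := by
    intro s _
    have h1 : HasDerivAt (fun s : ℝ => t * y * (1 - s) + 1) (t * y * (-1)) s :=
      (((hasDerivAt_id s).const_sub 1).const_mul (t * y)).add_const 1
    have h2 : HasDerivAt (fun s : ℝ => -(ν - s * t) * y) (t * y) s := by
      have := ((((hasDerivAt_id s).mul_const t).const_sub ν).neg).mul_const y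
      simpa using this
    have h3 := (h1.mul h2.exp).mul_const (y ^ 2)⁻¹
    refine h3.congr_deriv ?_
    field_simp
    ring
  rw [intervalIntegral.integral_eq_sub_of_hasDerivAt hd
    (Continuous.intervalIntegrable (by fun_prop) _ _)]
  have e : Real.exp (-(ν - 1 * t) * y) = Real.exp (t * y) * Real.exp (-ν * y) := by
    rw [← Real.exp_add]; congr 1; ring
  have e2 : y ^ (-2 : ℤ) = (y ^ 2)⁻¹ := by
    rw [zpow_neg]; norm_cast
  rw [e, e2]
  simp only [zero_mul, sub_zero]
  ring

lemma aux_int (ν t : ℝ) (hν : 1 < ν) (ht : t < ν) :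
    IntervalIntegrable (fun s => t ^ 2 * (1 - s) / (ν - s * t)) volume 0 1 ∧
    ∫ s in (0 : ℝ)..1, t ^ 2 * (1 - s) / (ν - s * t) =
      (ν - t) * Real.log (ν - t) - ν * Real.log ν + t * (Real.log ν + 1) := by
  have hp : ∀ s ∈ Set.uIcc (0 : ℝ) 1, 0 < ν - s * t := by
    intro s hs
    rw [Set.uIcc_of_le zero_le_one] at hs
    exact aux_pos ν t s hν ht hs.1 hs.2
  have hi : IntervalIntegrable (fun s => t ^ 2 * (1 - s) / (ν - s * t)) volume 0 1 := by
    apply ContinuousOn.intervalIntegrable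
    exact ContinuousOn.div (by fun_prop) (by fun_prop) (fun s hs => (hp s hs).ne')
  refine ⟨hi, ?_⟩
  have hd : ∀ s ∈ Set.uIcc (0 : ℝ) 1, HasDerivAt
      (fun s : ℝ => (ν - t) * Real.log (ν - s * t) + s * t)
      (t ^ 2 * (1 - s) / (ν - s * t)) s := by
    intro s hs
    have h0 := (hp s hs).ne'
    have h1 := ((hasDerivAt_id s).mul_const t)
    have h2 := (((h1.const_sub ν).log h0).const_mul (ν - t)).add h1
    refine h2.congr_deriv ?_
    simp only [id]
    have h0' : ν - t * s ≠ 0 := by rwa [mul_comm t s]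
    field_simp
    ring
  rw [intervalIntegral.integral_eq_sub_of_hasDerivAt hd hi]
  simp only [zero_mul, sub_zero, one_mul]
  ring

lemma aux_K (ν t : ℝ) (hν : 1 < ν) (ht : t < ν) :
    IntegrableOn (fun y : ℝ => (Real.exp (t * y) - 1 - t * y) * Real.exp (-ν * y) * y ^ (-2 : ℤ))
      (Set.Ioi 0) ∧
    ∫ y in Set.Ioi (0 : ℝ), (Real.exp (t * y) - 1 - t * y) * Real.exp (-ν * y) * y ^ (-2 : ℤ) =
      (ν - t) * Real.log (ν - t) - ν * Real.log ν + t * (Real.log ν + 1) := by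
  have hae : ∀ᵐ s ∂(volume.restrict (Set.Ioc (0 : ℝ) 1)), s ∈ Set.Ioc (0 : ℝ) 1 :=
    ae_restrict_mem measurableSet_Ioc
  have hF : Integrable (fun p : ℝ × ℝ => t ^ 2 * (1 - p.1) * Real.exp (-(ν - p.1 * t) * p.2))
      ((volume.restrict (Set.Ioc (0 : ℝ) 1)).prod (volume.restrict (Set.Ioi (0 : ℝ)))) := by
    rw [integrable_prod_iff (Continuous.aestronglyMeasurable (by fun_prop))]
    constructor
    · filter_upwards [hae] with s hs
      exact (aux_y ν t s (aux_pos ν t s hν ht hs.1.le hs.2)).1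
    · have h := (intervalIntegrable_iff_integrableOn_Ioc_of_le zero_le_one).1 (aux_int ν t hν ht).1
      refine Integrable.congr h ?_
      filter_upwards [hae] with s hs
      rw [← (aux_y ν t s (aux_pos ν t s hν ht hs.1.le hs.2)).2]
      congr 1
      ext y
      rw [Real.norm_of_nonneg]
      have : 0 ≤ 1 - s := by linarith [hs.2]
      positivity
  constructor
  · refine Integrable.congr hF.integral_prod_right ?_
    filter_upwards [ae_restrict_mem measurableSet_Ioi] with y hy
    exact aux_s ν t y hy
  · rw [← (aux_int ν t hν ht).2, intervalIntegral.integral_of_le zero_le_one]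
    rw [setIntegral_congr_fun measurableSet_Ioi (fun y hy => (aux_s ν t y hy).symm),
      setIntegral_congr_fun measurableSet_Ioc
        (fun s hs => (aux_y ν t s (aux_pos ν t s hν ht hs.1.le hs.2)).2.symm)]
    exact (integral_integral_swap hF).symm

theorem stmt_11 (ν t : ℝ) (hν : 1 < ν) (ht : t < ν) :
    ∫ y in Set.Ioi (0 : ℝ),
        (Real.exp (t * y) - 1 - (Real.exp y - 1) * t) * Real.exp (-ν * y) * y ^ (-2 : ℤ) =
      -ν * Real.log ν + (ν - t) * Real.log (ν - t) +
        (ν * Real.log ν - (ν - 1) * Real.log (ν - 1)) * t := by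
  obtain ⟨i1, e1⟩ := aux_K ν t hν ht
  obtain ⟨i2, e2⟩ := aux_K ν 1 hν hν
  have h := integral_sub i1 (i2.const_mul t)
  rw [integral_const_mul, e1, e2] at h
  calc _ = _ := by
        congr 1
        ext y
        rw [one_mul]
        ring
    _ = _ := h
    _ = _ := by ring
end

section
/- Let α < 2 with α ≠ 0 and α ≠ 1, let ν > 0, and let t be a real number with ν + t > 0. Then ∫_0^∞ (e^{-t y} - 1 - (e^{-y} - 1) t) · e^{-ν y} y^{-(1+α)} dy = Γ(-α) · ((ν + t)^α - ν^α + (ν^α - (ν + 1)^α) t), where Γ is the real Gamma function. -/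
open MeasureTheory

open Filter Topology in
lemma aux_step (c a : Fin 3 → ℝ) (s m K : ℝ) (k : ℕ) (ha : ∀ i, 0 < a i) (hm : 0 < m)
    (hs : s ≠ 0) (hks : 0 < k + s)
    (hb : ∀ y : ℝ, 0 < y → |∑ i, c i * Real.exp (-(a i * y))| ≤ K * (y ^ k * Real.exp (-m * y)))
    (hI : IntegrableOn (fun y : ℝ => (∑ i, c i * a i * Real.exp (-(a i * y))) * y ^ (s + 1 - 1))
      (Set.Ioi 0))
    (hE : ∫ y in Set.Ioi (0 : ℝ), (∑ i, c i * a i * Real.exp (-(a i * y))) * y ^ (s + 1 - 1)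
      = Real.Gamma (s + 1) * ∑ i, c i * a i * a i ^ (-(s + 1))) :
    IntegrableOn (fun y : ℝ => (∑ i, c i * Real.exp (-(a i * y))) * y ^ (s - 1)) (Set.Ioi 0) ∧
    ∫ y in Set.Ioi (0 : ℝ), (∑ i, c i * Real.exp (-(a i * y))) * y ^ (s - 1)
      = Real.Gamma s * ∑ i, c i * a i ^ (-s) := by
  have hI1 : IntegrableOn (fun y : ℝ => (∑ i, c i * Real.exp (-(a i * y))) * y ^ (s - 1))
      (Set.Ioi 0) := by
    have h1 : IntegrableOn (fun y : ℝ => K * (y ^ (k + s - 1) * Real.exp (-m * y ^ (1 : ℝ))))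
        (Set.Ioi 0) :=
      (integrableOn_rpow_mul_exp_neg_mul_rpow (by linarith) one_pos hm).const_mul K
    refine Integrable.mono' h1 ?_ ?_
    · refine Measurable.aestronglyMeasurable ?_
      fun_prop
    · refine (ae_restrict_mem measurableSet_Ioi).mono fun y hy => ?_
      have hy : 0 < y := hy
      rw [Real.norm_eq_abs, abs_mul, abs_of_pos (Real.rpow_pos_of_pos hy _)]
      have e : y ^ ((k : ℝ) + s - 1) = y ^ k * y ^ (s - 1) := by
        rw [← Real.rpow_natCast, ← Real.rpow_add hy]; congr 1; ring
      rw [e, Real.rpow_one]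
      calc _ ≤ K * (y ^ k * Real.exp (-m * y)) * y ^ (s - 1) :=
            mul_le_mul_of_nonneg_right (hb y hy) (Real.rpow_pos_of_pos hy _).le
        _ = _ := by ring
  refine ⟨hI1, ?_⟩
  have hbd : ∀ y : ℝ, 0 < y → ‖(∑ i, c i * Real.exp (-(a i * y))) * y ^ s‖ ≤
      K * (y ^ (k + s) * Real.exp (-m * y)) := by
    intro y hy
    rw [Real.norm_eq_abs, abs_mul, abs_of_pos (Real.rpow_pos_of_pos hy _)]
    have e : y ^ ((k : ℝ) + s) = y ^ k * y ^ s := by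
      rw [← Real.rpow_natCast, ← Real.rpow_add hy]
    rw [e]
    calc _ ≤ K * (y ^ k * Real.exp (-m * y)) * y ^ s :=
          mul_le_mul_of_nonneg_right (hb y hy) (Real.rpow_pos_of_pos hy _).le
      _ = _ := by ring
  have hz : Tendsto ((fun y : ℝ => ∑ i, c i * Real.exp (-(a i * y))) * fun y : ℝ => y ^ s)
      (𝓝[>] 0) (𝓝 0) := by
    refine squeeze_zero_norm' (a := fun y : ℝ => K * (y ^ (k + s) * Real.exp (-m * y))) ?_ ?_
    · filter_upwards [self_mem_nhdsWithin] with y hy using hbd y hy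
    · have : ContinuousAt (fun y : ℝ => K * (y ^ (k + s) * Real.exp (-m * y))) 0 := by
        have := Real.continuousAt_rpow_const (0 : ℝ) (k + s) (Or.inr hks.le)
        fun_prop
      have h2 := this.tendsto
      simp only [Real.zero_rpow hks.ne', zero_mul, mul_zero] at h2
      exact h2.mono_left nhdsWithin_le_nhds
  have hinf : Tendsto ((fun y : ℝ => ∑ i, c i * Real.exp (-(a i * y))) * fun y : ℝ => y ^ s)
      atTop (𝓝 0) := by
    refine squeeze_zero_norm' (a := fun y : ℝ => K * (y ^ (k + s) * Real.exp (-m * y))) ?_ ?_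
    · filter_upwards [eventually_gt_atTop 0] with y hy using hbd y hy
    · simpa using (tendsto_rpow_mul_exp_neg_mul_atTop_nhds_zero (k + s) m hm).const_mul K
  have key := integral_Ioi_mul_deriv_eq_deriv_mul (a := (0 : ℝ)) (a' := (0 : ℝ)) (b' := (0 : ℝ))
    (u := fun y : ℝ => ∑ i, c i * Real.exp (-(a i * y)))
    (v := fun y : ℝ => y ^ s)
    (u' := fun y : ℝ => -∑ i, c i * a i * Real.exp (-(a i * y)))
    (v' := fun y : ℝ => s * y ^ (s - 1)) ?_ ?_ ?_ ?_ hz hinf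
  · have e1 : ∫ y in Set.Ioi (0 : ℝ), (∑ i, c i * Real.exp (-(a i * y))) * (s * y ^ (s - 1)) =
        s * ∫ y in Set.Ioi (0 : ℝ), (∑ i, c i * Real.exp (-(a i * y))) * y ^ (s - 1) := by
      rw [← integral_const_mul]
      congr 1; ext y; ring
    rw [e1] at key
    simp only [add_sub_cancel_right] at hE
    simp only [neg_mul, integral_neg] at key
    rw [hE, Real.Gamma_add_one hs] at key
    apply mul_left_cancel₀ hs
    rw [key]
    have e2 : ∀ i, c i * a i * a i ^ (-(s + 1)) = c i * a i ^ (-s) := by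
      intro i
      rw [mul_assoc, ← Real.rpow_one_add' (ha i).le (by simpa using hs)]
      congr 2; ring
    simp only [e2]
    ring
  · intro y _
    have : HasDerivAt (fun y : ℝ => ∑ i, c i * Real.exp (-(a i * y)))
        (∑ i, c i * (Real.exp (-(a i * y)) * (-(a i * 1)))) y :=
      HasDerivAt.fun_sum fun i _ =>
        (((hasDerivAt_id y).const_mul (a i)).neg.exp).const_mul (c i)
    refine this.congr_deriv ?_
    symm
    rw [← Finset.sum_neg_distrib]
    refine Finset.sum_congr rfl fun i _ => by ring
  · intro y hy
    exact Real.hasDerivAt_rpow_const (Or.inl (ne_of_gt hy))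
  · refine IntegrableOn.congr_fun (Integrable.const_mul hI1 s) (fun y _ => ?_) measurableSet_Ioi
    simp only [Pi.mul_apply]; ring
  · refine IntegrableOn.congr_fun (Integrable.neg hI) (fun y _ => ?_) measurableSet_Ioi
    simp only [Pi.mul_apply, Pi.neg_apply, add_sub_cancel_right]; ring

lemma aux_base (c a : Fin 3 → ℝ) (s : ℝ) (ha : ∀ i, 0 < a i) (hs : 0 < s) :
    IntegrableOn (fun y : ℝ => (∑ i, c i * Real.exp (-(a i * y))) * y ^ (s - 1)) (Set.Ioi 0) ∧
    ∫ y in Set.Ioi (0 : ℝ), (∑ i, c i * Real.exp (-(a i * y))) * y ^ (s - 1)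
      = Real.Gamma s * ∑ i, c i * a i ^ (-s) := by
  have hi : ∀ i, IntegrableOn (fun y : ℝ => c i * (y ^ (s - 1) * Real.exp (-(a i * y))))
      (Set.Ioi 0) := by
    intro i
    have := (integrableOn_rpow_mul_exp_neg_mul_rpow (p := 1) (s := s - 1) (by linarith) one_pos
      (ha i)).const_mul (c i)
    simpa [IntegrableOn] using this
  have e : (fun y : ℝ => (∑ i, c i * Real.exp (-(a i * y))) * y ^ (s - 1)) =
      fun y => ∑ i, c i * (y ^ (s - 1) * Real.exp (-(a i * y))) := by
    ext y
    rw [Finset.sum_mul]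
    exact Finset.sum_congr rfl fun i _ => by ring
  rw [e]
  refine ⟨integrable_finsetSum _ fun i _ => hi i, ?_⟩
  rw [integral_finsetSum _ fun i _ => hi i, Finset.mul_sum]
  refine Finset.sum_congr rfl fun i _ => ?_
  rw [integral_const_mul, Real.integral_rpow_mul_exp_neg_mul_Ioi hs (ha i), one_div,
    Real.inv_rpow (ha i).le, Real.rpow_neg (ha i).le]
  ring

lemma aux_exp1 (x : ℝ) (hx : 0 ≤ x) : |Real.exp (-x) - 1| ≤ x := by
  rw [abs_le]
  have := Real.one_sub_le_exp_neg x
  have := Real.exp_le_one_iff.2 (neg_nonpos.2 hx)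
  constructor <;> linarith

lemma aux_exp2 (x : ℝ) (hx : 0 ≤ x) : |Real.exp (-x) - 1 + x| ≤ x ^ 2 := by
  rcases le_total x 1 with h | h
  · have := Real.abs_exp_sub_one_sub_id_le (x := -x) (by rwa [abs_neg, abs_of_nonneg hx])
    simpa using this
  · have := Real.one_sub_le_exp_neg x
    have := Real.exp_le_one_iff.2 (neg_nonpos.2 hx)
    rw [abs_le]
    constructor <;> nlinarith

lemma aux_factor (c a : Fin 3 → ℝ) (m y : ℝ) :
    ∑ i, c i * Real.exp (-(a i * y)) =
      (∑ i, c i * Real.exp (-((a i - m) * y))) * Real.exp (-m * y) := by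
  rw [Finset.sum_mul]
  refine Finset.sum_congr rfl fun i _ => ?_
  rw [mul_assoc, ← Real.exp_add]
  congr 2; ring

lemma aux_bound1 (c a : Fin 3 → ℝ) (m : ℝ) (hm : ∀ i, m ≤ a i) (hc : ∑ i, c i = 0)
    (y : ℝ) (hy : 0 < y) : |∑ i, c i * Real.exp (-(a i * y))| ≤
      (∑ i, |c i| * (a i - m)) * (y ^ 1 * Real.exp (-m * y)) := by
  rw [aux_factor c a m, abs_mul, abs_of_pos (Real.exp_pos _), ← mul_assoc]
  refine mul_le_mul_of_nonneg_right ?_ (Real.exp_pos _).le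
  have e : ∑ i, c i * Real.exp (-((a i - m) * y)) =
      ∑ i, c i * (Real.exp (-((a i - m) * y)) - 1) := by
    simp only [mul_sub, Finset.sum_sub_distrib, mul_one, hc, sub_zero]
  rw [e, Finset.sum_mul]
  refine (Finset.abs_sum_le_sum_abs _ _).trans (Finset.sum_le_sum fun i _ => ?_)
  rw [abs_mul, pow_one, mul_assoc]
  exact mul_le_mul_of_nonneg_left
    (aux_exp1 _ (mul_nonneg (sub_nonneg.2 (hm i)) hy.le)) (abs_nonneg _)

lemma aux_bound2 (c a : Fin 3 → ℝ) (m : ℝ) (hm : ∀ i, m ≤ a i) (hc : ∑ i, c i = 0)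
    (hca : ∑ i, c i * a i = 0)
    (y : ℝ) (hy : 0 < y) : |∑ i, c i * Real.exp (-(a i * y))| ≤
      (∑ i, |c i| * (a i - m) ^ 2) * (y ^ 2 * Real.exp (-m * y)) := by
  rw [aux_factor c a m, abs_mul, abs_of_pos (Real.exp_pos _), ← mul_assoc]
  refine mul_le_mul_of_nonneg_right ?_ (Real.exp_pos _).le
  have e : ∑ i, c i * Real.exp (-((a i - m) * y)) =
      ∑ i, c i * (Real.exp (-((a i - m) * y)) - 1 + (a i - m) * y) := by
    simp only [Fin.sum_univ_three] at hc hca ⊢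
    linear_combination (1 + m * y) * hc - y * hca
  rw [e, Finset.sum_mul]
  refine (Finset.abs_sum_le_sum_abs _ _).trans (Finset.sum_le_sum fun i _ => ?_)
  rw [abs_mul, mul_assoc, ← mul_pow]
  exact mul_le_mul_of_nonneg_left
    (aux_exp2 _ (mul_nonneg (sub_nonneg.2 (hm i)) hy.le)) (abs_nonneg _)

lemma aux_one (c a : Fin 3 → ℝ) (s m : ℝ) (hm0 : 0 < m) (hm : ∀ i, m ≤ a i)
    (hc : ∑ i, c i = 0) (hs : -1 < s) (hs0 : s ≠ 0) :
    IntegrableOn (fun y : ℝ => (∑ i, c i * Real.exp (-(a i * y))) * y ^ (s - 1)) (Set.Ioi 0) ∧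
    ∫ y in Set.Ioi (0 : ℝ), (∑ i, c i * Real.exp (-(a i * y))) * y ^ (s - 1)
      = Real.Gamma s * ∑ i, c i * a i ^ (-s) := by
  have ha : ∀ i, 0 < a i := fun i => hm0.trans_le (hm i)
  have h := aux_base (fun i => c i * a i) a (s + 1) ha (by linarith)
  exact aux_step c a s m _ 1 ha hm0 hs0 (by push_cast; linarith)
    (aux_bound1 c a m hm hc) h.1 h.2

lemma aux_two (c a : Fin 3 → ℝ) (s m : ℝ) (hm0 : 0 < m) (hm : ∀ i, m ≤ a i)
    (hc : ∑ i, c i = 0) (hca : ∑ i, c i * a i = 0) (hs : -2 < s) (hs0 : s ≠ 0) (hs1 : s ≠ -1) :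
    ∫ y in Set.Ioi (0 : ℝ), (∑ i, c i * Real.exp (-(a i * y))) * y ^ (s - 1)
      = Real.Gamma s * ∑ i, c i * a i ^ (-s) := by
  have ha : ∀ i, 0 < a i := fun i => hm0.trans_le (hm i)
  have h := aux_one (fun i => c i * a i) a (s + 1) m hm0 hm hca (by linarith)
    (fun h => hs1 (by linarith))
  exact (aux_step c a s m _ 2 ha hm0 hs0 (by push_cast; linarith)
    (aux_bound2 c a m hm hc hca) h.1 h.2).2

theorem stmt_12 (α ν t : ℝ) (hα : α < 2) (hα0 : α ≠ 0) (hα1 : α ≠ 1)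
    (hν : 0 < ν) (ht : 0 < ν + t) :
    ∫ y in Set.Ioi (0 : ℝ),
        (Real.exp (-t * y) - 1 - (Real.exp (-y) - 1) * t) * Real.exp (-ν * y) * y ^ (-(1 + α)) =
      Real.Gamma (-α) * ((ν + t) ^ α - ν ^ α + (ν ^ α - (ν + 1) ^ α) * t) := by
  have h := aux_two ![1, t - 1, -t] ![ν + t, ν, ν + 1] (-α) (min (ν + t) ν) (lt_min ht hν)
    (by
      intro i
      fin_cases i
      · exact min_le_left _ _
      · exact min_le_right _ _
      · exact (min_le_right _ _).trans (by simp))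
    (by simp [Fin.sum_univ_three])
    (by simp [Fin.sum_univ_three]; ring)
    (by linarith) (neg_ne_zero.2 hα0) (fun h => hα1 (by linarith))
  simp only [Fin.sum_univ_three, Matrix.cons_val_zero, Matrix.cons_val_one, Matrix.cons_val,
    neg_neg] at h
  convert h using 1
  · congr 1
    ext y
    rw [show -(1 + α) = -α - 1 by ring]
    congr 1
    rw [show -((ν + t) * y) = -t * y + -ν * y by ring, show -((ν + 1) * y) = -y + -ν * y by ring,
      show -(ν * y) = -ν * y by ring, Real.exp_add, Real.exp_add]
    ring
  · ring
end

section
/- Let ν > 0 and let t be a real number with ν + t > 0. Then ∫_0^∞ (e^{-t y} - 1 - (e^{-y} - 1) t) · e^{-ν y} y^{-2} dy = -ν log ν + (ν log ν - (ν + 1) log(ν + 1)) · t + (ν + t) log(ν + t). -/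
open MeasureTheory

namespace Aux14
open Real Set Filter Topology

lemma bound1 (x : ℝ) : |exp (-x) - 1| ≤ |x| * (1 + exp (-x)) := by
  have h1 := add_one_le_exp (-x)
  have h2 := add_one_le_exp x
  have h3 : exp x * exp (-x) = 1 := by rw [← exp_add]; simp
  have h4 := exp_pos (-x)
  have h5 := exp_pos x
  rcases le_total 0 x with h | h
  · rw [abs_of_nonneg h, abs_of_nonpos (by have := exp_le_one_iff.2 (neg_nonpos.2 h); linarith)]
    nlinarith
  · rw [abs_of_nonpos h, abs_of_nonneg (by linarith)]
    nlinarith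

lemma bound2 (x : ℝ) : exp (-x) - 1 + x ≤ x ^ 2 * (1 + exp (-x)) := by
  have h1 := add_one_le_exp (-x)
  have h2 := add_one_le_exp x
  have h3 : exp x * exp (-x) = 1 := by rw [← exp_add]; simp
  have h4 := exp_pos (-x)
  have h5 := exp_pos x
  have h6 : (x + 1) * exp (-x) ≤ 1 := by nlinarith
  rcases le_total 0 x with h | h
  · have : exp (-x) ≤ 1 := exp_le_one_iff.2 (neg_nonpos.2 h)
    nlinarith
  · have h7 : (1 - x) * ((x + 1) * exp (-x)) ≤ (1 - x) * 1 :=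
      mul_le_mul_of_nonneg_left h6 (by linarith)
    nlinarith [mul_nonneg (sq_nonneg x) h4.le, h7]

/-- the numerator -/
noncomputable def G (ν t y : ℝ) : ℝ := (exp (-(t * y)) - 1 + t * y) * exp (-ν * y)

lemma G_nonneg (ν t y : ℝ) : 0 ≤ G ν t y := by
  have := add_one_le_exp (-(t * y))
  exact mul_nonneg (by linarith) (exp_pos _).le

lemma exp_split (ν t y : ℝ) : exp (-(ν + t) * y) = exp (-(t * y)) * exp (-ν * y) := by
  rw [← exp_add]; congr 1; ring

lemma G_le (ν t y : ℝ) :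
    G ν t y ≤ t ^ 2 * y ^ 2 * (exp (-ν * y) + exp (-(ν + t) * y)) := by
  have := mul_le_mul_of_nonneg_right (bound2 (t * y)) (exp_pos (-ν * y)).le
  rw [exp_split]
  unfold G
  linarith

lemma int_dom (ν t : ℝ) (hν : 0 < ν) (ht : 0 < ν + t) (c : ℝ) :
    IntegrableOn (fun y => c * (exp (-ν * y) + exp (-(ν + t) * y))) (Ioi 0) :=
  ((exp_neg_integrableOn_Ioi 0 hν).add (exp_neg_integrableOn_Ioi 0 ht)).const_mul c

lemma int_G (ν t : ℝ) (hν : 0 < ν) (ht : 0 < ν + t) :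
    IntegrableOn (fun y => G ν t y * (y ^ 2)⁻¹) (Ioi 0) := by
  refine (int_dom ν t hν ht (t ^ 2)).mono' ?_ ?_
  · unfold G
    exact Measurable.aestronglyMeasurable (by fun_prop)
  · filter_upwards [ae_restrict_mem measurableSet_Ioi] with y hy
    have hy : 0 < y := hy
    rw [norm_of_nonneg (mul_nonneg (G_nonneg _ _ _) (by positivity)), ← div_eq_mul_inv,
      div_le_iff₀ (by positivity)]
    linarith [G_le ν t y]

lemma int_F (ν t : ℝ) (hν : 0 < ν) (ht : 0 < ν + t) :
    IntegrableOn (fun y => y⁻¹ * (exp (-(ν * y)) - exp (-((ν + t) * y)))) (Ioi 0) := by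
  refine (int_dom ν t hν ht |t|).mono' ?_ ?_
  · exact Measurable.aestronglyMeasurable (by fun_prop)
  · filter_upwards [ae_restrict_mem measurableSet_Ioi] with y hy
    have hy : 0 < y := hy
    have := mul_le_mul_of_nonneg_right (bound1 (t * y)) (exp_pos (-ν * y)).le
    rw [norm_mul, norm_inv, norm_of_nonneg hy.le, ← div_eq_inv_mul, div_le_iff₀ hy,
      ← neg_mul, ← neg_mul, exp_split, norm_eq_abs, abs_sub_comm]
    have e1 : |exp (-(t * y)) * exp (-ν * y) - exp (-ν * y)|
        = |exp (-(t * y)) - 1| * exp (-ν * y) := by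
      rw [← sub_one_mul, abs_mul, abs_of_pos (exp_pos (-ν * y))]
    rw [abs_mul, abs_of_pos hy] at this
    rw [e1]
    linarith

lemma val_F (ν t : ℝ) (hν : 0 < ν) (ht : 0 < ν + t) :
    ∫ y in Ioi 0, y⁻¹ * (exp (-(ν * y)) - exp (-((ν + t) * y))) = log ((ν + t) / ν) := by
  have h := Frullani.integral_Ioi_eq (f := fun x : ℝ => exp (-x)) (L := (1:ℝ)) (R := 0)
    (a := ν) (b := ν + t)
    ((by fun_prop : Continuous fun x : ℝ => exp (-x)).locallyIntegrable.locallyIntegrableOn _) hν ht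
    (by
      have : Tendsto (fun x : ℝ => exp (-x)) (𝓝 0) (𝓝 (exp (-0))) :=
        (by fun_prop : Continuous fun x : ℝ => exp (-x)).tendsto 0
      simp only [neg_zero, exp_zero] at this
      exact this.mono_left nhdsWithin_le_nhds)
    tendsto_exp_neg_atTop_nhds_zero
    (by simpa using int_F ν t hν ht)
  simpa using h

lemma lim_top (a : ℝ) (ha : 0 < a) : Tendsto (fun y => y * exp (-a * y)) atTop (𝓝 0) := by
  have h := ((tendsto_pow_mul_exp_neg_atTop_nhds_zero 1).comp
    (tendsto_id.const_mul_atTop ha)).const_mul a⁻¹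
  simp only [mul_zero] at h
  refine h.congr fun y => ?_
  simp only [Function.comp, id, pow_one, neg_mul]
  field_simp

lemma G_lim (ν t : ℝ) (l : Filter ℝ) (hl : ∀ᶠ y in l, 0 < y)
    (h : Tendsto (fun y => t ^ 2 * (y * exp (-ν * y) + y * exp (-(ν + t) * y))) l (𝓝 0)) :
    Tendsto (G ν t * fun y => -y⁻¹) l (𝓝 0) := by
  rw [← neg_zero]
  have : Tendsto (fun y => G ν t y * y⁻¹) l (𝓝 0) := by
    refine tendsto_of_tendsto_of_tendsto_of_le_of_le' tendsto_const_nhds h ?_ ?_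
    · filter_upwards [hl] with y hy
      exact mul_nonneg (G_nonneg _ _ _) (by positivity)
    · filter_upwards [hl] with y hy
      rw [← div_eq_mul_inv, div_le_iff₀ hy]
      linarith [G_le ν t y]
  refine this.neg.congr fun y => ?_
  simp

lemma G_deriv (ν t y : ℝ) : HasDerivAt (G ν t)
    ((ν + t) * (exp (-(ν * y)) - exp (-((ν + t) * y))) - t * ν * y * exp (-ν * y)) y := by
  have h1 : HasDerivAt (fun y : ℝ => t * y) t y := by
    simpa using (hasDerivAt_id y).const_mul t
  have h2 : HasDerivAt (fun y : ℝ => -ν * y) (-ν) y := by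
    simpa using (hasDerivAt_id y).const_mul (-ν)
  have := ((h1.neg.exp.sub_const 1).add h1).mul h2.exp
  refine this.congr_deriv ?_
  rw [← neg_mul, ← neg_mul, exp_split]
  simp only [Pi.add_apply, Pi.neg_apply]
  ring

lemma val_G (ν t : ℝ) (hν : 0 < ν) (ht : 0 < ν + t) :
    ∫ y in Ioi 0, G ν t y * (y ^ 2)⁻¹ = (ν + t) * log ((ν + t) / ν) - t := by
  have hI : ∀ y ∈ Ioi (0:ℝ),
      -((ν + t) * (y⁻¹ * (exp (-(ν * y)) - exp (-((ν + t) * y)))) - t * ν * exp (-ν * y)) =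
      ((ν + t) * (exp (-(ν * y)) - exp (-((ν + t) * y))) - t * ν * y * exp (-ν * y)) * -y⁻¹ := by
    intro y hy
    have hy : y ≠ 0 := ne_of_gt hy
    field_simp
  have i1 := (int_F ν t hν ht).const_mul (ν + t)
  have i2 := (exp_neg_integrableOn_Ioi 0 hν).const_mul (t * ν)
  have h := integral_Ioi_mul_deriv_eq_deriv_mul (a := 0) (u := G ν t) (v := fun y => -y⁻¹)
    (v' := fun y => (y ^ 2)⁻¹) (a' := 0) (b' := 0)
    (fun y _ => G_deriv ν t y)
    (fun y hy => by
      have hy' : y ≠ 0 := ne_of_gt hy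
      have h0 : HasDerivAt (fun y : ℝ => y⁻¹) (-(y ^ 2)⁻¹) y := hasDerivAt_inv hy'
      have h1 := h0.fun_neg
      rwa [neg_neg] at h1)
    (int_G ν t hν ht)
    ((integrableOn_congr_fun hI measurableSet_Ioi).1 (i1.sub i2).neg)
    (by
      refine G_lim ν t _ self_mem_nhdsWithin ?_
      have : Continuous (fun y => t ^ 2 * (y * exp (-ν * y) + y * exp (-(ν + t) * y))) := by
        fun_prop
      have := this.tendsto 0
      simp only [zero_mul, add_zero, mul_zero] at this
      exact this.mono_left nhdsWithin_le_nhds)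
    (by
      refine G_lim ν t _ (eventually_gt_atTop 0) ?_
      simpa using ((lim_top ν hν).add (lim_top (ν + t) ht)).const_mul (t ^ 2))
  rw [h, ← setIntegral_congr_fun measurableSet_Ioi hI, integral_neg, integral_sub i1 i2,
    integral_const_mul, integral_const_mul, val_F ν t hν ht, integral_exp_mul_Ioi (by linarith)]
  simp
  field_simp

end Aux14

theorem stmt_14 (ν t : ℝ) (hν : 0 < ν) (ht : 0 < ν + t) :
    ∫ y in Set.Ioi (0 : ℝ),
        (Real.exp (-t * y) - 1 - (Real.exp (-y) - 1) * t) * Real.exp (-ν * y) * y ^ (-2 : ℤ) =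
      -ν * Real.log ν + (ν * Real.log ν - (ν + 1) * Real.log (ν + 1)) * t +
        (ν + t) * Real.log (ν + t) := by
  have h1 : 0 < ν + 1 := by linarith
  have e : ∀ y : ℝ,
      (Real.exp (-t * y) - 1 - (Real.exp (-y) - 1) * t) * Real.exp (-ν * y) * y ^ (-2 : ℤ) =
      Aux14.G ν t y * (y ^ 2)⁻¹ - t * (Aux14.G ν 1 y * (y ^ 2)⁻¹) := by
    intro y
    have : y ^ (-2 : ℤ) = (y ^ 2)⁻¹ := by rw [zpow_neg]; rfl
    rw [this]
    unfold Aux14.G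
    rw [one_mul, neg_mul t y]
    ring
  simp_rw [e]
  rw [integral_sub (Aux14.int_G ν t hν ht) ((Aux14.int_G ν 1 hν h1).const_mul t),
    integral_const_mul, Aux14.val_G ν t hν ht, Aux14.val_G ν 1 hν h1,
    Real.log_div ht.ne' hν.ne', Real.log_div h1.ne' hν.ne']
  ring
end

section
/- Let ν > 1 and let t be a real number with t < ν. Then the improper integral ∫_ν^∞ (log u - log(u - t) + t · log((u - 1)/u)) du converges and equals -ν log ν + (ν - t) log(ν - t) + (ν log ν - (ν - 1) log(ν - 1)) · t. -/
open MeasureTheory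

lemma aux_main_s15 (ν s : ℝ) (hν : 0 < ν) (hs : s < ν) :
    IntegrableOn (fun u : ℝ => Real.log u - Real.log (u - s) - s * u⁻¹) (Set.Ioi ν) ∧
    ∫ u in Set.Ioi ν, (Real.log u - Real.log (u - s) - s * u⁻¹) =
      s - (ν * Real.log ν - (ν - s) * Real.log (ν - s) - s * Real.log ν) := by
  have hd : ∀ x ∈ Set.Ici ν, HasDerivAt
      (fun u : ℝ => u * Real.log u - (u - s) * Real.log (u - s) - s * Real.log u)
      (Real.log x - Real.log (x - s) - s * x⁻¹) x := by
    intro x hx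
    have hx' : ν ≤ x := hx
    have h0 : x ≠ 0 := by linarith
    have h1 : x - s ≠ 0 := by
      intro h
      linarith
    have a1 := Real.hasDerivAt_mul_log h0
    have a2 := (Real.hasDerivAt_mul_log h1).comp x ((hasDerivAt_id x).sub_const s)
    have a3 := (Real.hasDerivAt_log h0).const_mul s
    refine ((a1.sub a2).sub a3).congr_deriv ?_
    ring
  have hpos : ∀ x ∈ Set.Ioi ν, 0 ≤ Real.log x - Real.log (x - s) - s * x⁻¹ := by
    intro x hx
    have hx' : ν < x := hx
    have h0 : 0 < x := by linarith
    have h1 : 0 < x - s := by linarith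
    have h := Real.log_le_sub_one_of_pos (div_pos h1 h0)
    rw [Real.log_div h1.ne' h0.ne'] at h
    have e : (x - s) / x - 1 = - (s * x⁻¹) := by
      field_simp
      ring
    linarith
  have hlim : Filter.Tendsto
      (fun u : ℝ => u * Real.log u - (u - s) * Real.log (u - s) - s * Real.log u)
      Filter.atTop (nhds s) := by
    have b1 := Real.tendsto_mul_log_one_add_div_atTop (-s)
    have b2 : Filter.Tendsto (fun u : ℝ => Real.log (1 + (-s) / u)) Filter.atTop (nhds 0) := by
      have c : Filter.Tendsto (fun u : ℝ => 1 + (-s) / u) Filter.atTop (nhds (1 + 0)) :=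
        tendsto_const_nhds.add (tendsto_const_nhds.div_atTop Filter.tendsto_id)
      have := c.log (by norm_num)
      simpa using this
    have b3 := b1.neg.add (b2.const_mul s)
    have e : - -s + s * 0 = s := by ring
    rw [e] at b3
    refine b3.congr' ?_
    filter_upwards [Filter.eventually_gt_atTop ν] with x hx
    have h0 : 0 < x := by linarith
    have h1 : 0 < x - s := by linarith
    have e : 1 + (-s) / x = (x - s) / x := by
      field_simp
      ring
    rw [e, Real.log_div h1.ne' h0.ne']
    ring
  exact ⟨integrableOn_Ioi_deriv_of_nonneg' hd hpos hlim,
    integral_Ioi_of_hasDerivAt_of_nonneg' hd hpos hlim⟩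

theorem stmt_15 (ν t : ℝ) (hν : 1 < ν) (ht : t < ν) :
    IntegrableOn
      (fun u : ℝ => Real.log u - Real.log (u - t) + t * Real.log ((u - 1) / u))
      (Set.Ioi ν) ∧
    ∫ u in Set.Ioi ν, (Real.log u - Real.log (u - t) + t * Real.log ((u - 1) / u)) =
      -ν * Real.log ν + (ν - t) * Real.log (ν - t) +
        (ν * Real.log ν - (ν - 1) * Real.log (ν - 1)) * t := by
  obtain ⟨i1, e1⟩ := aux_main_s15 ν t (by linarith) ht
  obtain ⟨i2, e2⟩ := aux_main_s15 ν 1 (by linarith) hν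
  have key : Set.EqOn
      (fun u : ℝ => (Real.log u - Real.log (u - t) - t * u⁻¹)
        - t * (Real.log u - Real.log (u - 1) - 1 * u⁻¹))
      (fun u : ℝ => Real.log u - Real.log (u - t) + t * Real.log ((u - 1) / u))
      (Set.Ioi ν) := by
    intro x hx
    have hx' : ν < x := hx
    have h0 : x ≠ 0 := by linarith
    have h1 : x - 1 ≠ 0 := by
      intro h
      linarith
    simp only [Real.log_div h1 h0]
    ring
  refine ⟨(i1.sub (i2.const_mul t)).congr_fun key measurableSet_Ioi, ?_⟩
  rw [← setIntegral_congr_fun measurableSet_Ioi key, integral_sub i1 (i2.const_mul t),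
    integral_const_mul, e1, e2]
  ring
end

section
/- Let ν > 0 and let t be a real number with ν + t > 0. Then the improper integral ∫_ν^∞ (log u - log(u + t) + t · log((u + 1)/u)) du converges and equals -ν log ν + (ν log ν - (ν + 1) log(ν + 1)) · t + (ν + t) log(ν + t). -/
open MeasureTheory

lemma aux_eq (u t : ℝ) (hu : 0 < u) (hut : 0 < u + t) :
    Real.log u - Real.log (u + t) + t * Real.log ((u + 1) / u) =
      Real.log ((1 + 1 / u) ^ t) - Real.log (1 + t * (1 / u)) := by
  have h1 : 1 + 1 / u = (u + 1) / u := by field_simp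
  have h2 : 1 + t * (1 / u) = (u + t) / u := by field_simp
  rw [h1, h2, Real.log_rpow (by positivity), Real.log_div hut.ne' hu.ne']
  ring

lemma aux_neg (s t : ℝ) (hs : 0 < s) (ht : t ≤ 0) : 1 + t * s ≤ (1 + s) ^ t := by
  have hp : 0 < 1 + s := by linarith
  have e : 1 + -(s / (1 + s)) = (1 + s)⁻¹ := by field_simp; ring
  have hle : s / (1 + s) ≤ 1 := by rw [div_le_one hp]; linarith
  have h := one_add_mul_self_le_rpow_one_add (s := -(s / (1 + s))) (by linarith)
    (p := 1 - t) (by linarith)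
  rw [e, Real.inv_rpow hp.le, ← Real.rpow_neg hp.le] at h
  have h' := mul_le_mul_of_nonneg_left h hp.le
  have e3 : (1 + s) * (1 + s) ^ (-(1 - t)) = (1 + s) ^ t := by
    have e5 : t = 1 + -(1 - t) := by ring
    conv_rhs => rw [e5, Real.rpow_add hp, Real.rpow_one]
  have e4 : (1 + s) * (1 + (1 - t) * -(s / (1 + s))) = 1 + t * s := by
    field_simp
    ring
  rwa [e3, e4] at h'

lemma aux_lim (t : ℝ) : Filter.Tendsto
    (fun u : ℝ => u * Real.log u - (u + t) * Real.log (u + t) +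
      t * ((u + 1) * Real.log (u + 1) - u * Real.log u)) Filter.atTop (nhds 0) := by
  have h1 := Real.tendsto_mul_log_one_add_div_atTop t
  have h2 := Real.tendsto_mul_log_one_add_div_atTop 1
  have h0 : ∀ s : ℝ, Filter.Tendsto (fun u : ℝ => Real.log (1 + s / u)) Filter.atTop (nhds 0) := by
    intro s
    have h : Filter.Tendsto (fun u : ℝ => 1 + s / u) Filter.atTop (nhds (1 + 0)) :=
      tendsto_const_nhds.add (tendsto_const_nhds.div_atTop Filter.tendsto_id)
    rw [add_zero] at h
    have := h.log one_ne_zero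
    rwa [Real.log_one] at this
  have h3 := ((h2.const_mul t).sub h1).add (((h0 1).sub (h0 t)).const_mul t)
  have e : t * 1 - t + t * (0 - 0) = 0 := by ring
  rw [e] at h3
  refine h3.congr' ?_
  filter_upwards [Filter.eventually_gt_atTop 0, Filter.eventually_gt_atTop (-t)] with u hu hut
  have hut' : 0 < u + t := by linarith
  have e1 : 1 + 1 / u = (u + 1) / u := by field_simp
  have e2 : 1 + t / u = (u + t) / u := by field_simp
  rw [e1, e2, Real.log_div hut'.ne' hu.ne', Real.log_div (by positivity) hu.ne']
  ring

theorem stmt_16 (ν t : ℝ) (hν : 0 < ν) (ht : 0 < ν + t) :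
    IntegrableOn
      (fun u : ℝ => Real.log u - Real.log (u + t) + t * Real.log ((u + 1) / u))
      (Set.Ioi ν) ∧
    ∫ u in Set.Ioi ν, (Real.log u - Real.log (u + t) + t * Real.log ((u + 1) / u)) =
      -ν * Real.log ν + (ν * Real.log ν - (ν + 1) * Real.log (ν + 1)) * t +
        (ν + t) * Real.log (ν + t) := by
  have hd : ∀ u ∈ Set.Ici ν, HasDerivAt (fun u : ℝ => u * Real.log u - (u + t) * Real.log (u + t) +
      t * ((u + 1) * Real.log (u + 1) - u * Real.log u))
      (Real.log u - Real.log (u + t) + t * Real.log ((u + 1) / u)) u := by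
    intro u hu
    have hu' : ν ≤ u := hu
    have hu0 : 0 < u := by linarith
    have hut : 0 < u + t := by linarith
    have k : ∀ s : ℝ, 0 < u + s → HasDerivAt (fun u : ℝ => (u + s) * Real.log (u + s))
        (Real.log (u + s) + 1) u := fun s hs =>
      (Real.hasDerivAt_mul_log hs.ne').comp_add_const u s
    have := ((Real.hasDerivAt_mul_log hu0.ne').sub (k t hut)).add
      (((k 1 (by linarith)).sub (Real.hasDerivAt_mul_log hu0.ne')).const_mul t)
    refine this.congr_deriv ?_
    rw [Real.log_div (by positivity) hu0.ne']
    ring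
  have hint : IntegrableOn
      (fun u : ℝ => Real.log u - Real.log (u + t) + t * Real.log ((u + 1) / u))
      (Set.Ioi ν) := by
    by_cases h : 0 ≤ t ∧ t ≤ 1
    · refine integrableOn_Ioi_deriv_of_nonpos' hd ?_ (aux_lim t)
      intro u hu
      have hu' : ν < u := hu
      have hu0 : 0 < u := by linarith
      have hut : 0 < u + t := by linarith
      rw [aux_eq u t hu0 hut, sub_nonpos]
      have hp : 0 < 1 / u := by positivity
      exact Real.log_le_log (by positivity)
        (rpow_one_add_le_one_add_mul_self (by linarith) h.1 h.2)
    · refine integrableOn_Ioi_deriv_of_nonneg' hd ?_ (aux_lim t)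
      intro u hu
      have hu' : ν < u := hu
      have hu0 : 0 < u := by linarith
      have hut : 0 < u + t := by linarith
      rw [aux_eq u t hu0 hut, sub_nonneg]
      have hp : 0 < 1 / u := by positivity
      have h2 : 1 + t * (1 / u) = (u + t) / u := by field_simp
      refine Real.log_le_log (by rw [h2]; positivity) ?_
      rcases le_or_gt 0 t with h0 | h0
      · have h1 : 1 ≤ t := by
          by_contra hc
          exact h ⟨h0, by linarith⟩
        exact one_add_mul_self_le_rpow_one_add (by linarith) h1
      · exact aux_neg _ _ hp h0.le
  refine ⟨hint, ?_⟩
  rw [integral_Ioi_of_hasDerivAt_of_tendsto' hd hint (aux_lim t)]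
  ring
end

section
/- Fix a real number t. Then ν² · ∫_0^∞ (e^{t y} - 1 - (e^{y} - 1) t) · e^{-ν y} y^{-1} dy tends to (t² - t)/2 as ν → +∞ (along real ν). -/
open MeasureTheory

lemma exp_rem_aux (x : ℝ) : |Real.exp x - 1 - x - x ^ 2 / 2| ≤ |x| ^ 3 * Real.exp |x| := by
  have h := Complex.norm_exp_sub_sum_le_norm_mul_exp (x : ℂ) 3
  have e : Complex.exp (x : ℂ) - ∑ m ∈ Finset.range 3, (x : ℂ) ^ m / (m.factorial : ℂ)
      = ((Real.exp x - 1 - x - x ^ 2 / 2 : ℝ) : ℂ) := by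
    simp [Finset.sum_range_succ, Nat.factorial]
    ring
  rw [e, Complex.norm_real, Complex.norm_real] at h
  simpa using h

lemma f_rem_aux (t y : ℝ) (hy : 0 < y) :
    |Real.exp (t * y) - 1 - (Real.exp y - 1) * t - (t ^ 2 - t) / 2 * y ^ 2|
      ≤ (|t| ^ 3 + |t|) * y ^ 3 * Real.exp ((|t| + 1) * y) := by
  have h1 := exp_rem_aux (t * y)
  have h2 := exp_rem_aux y
  rw [abs_mul, abs_of_pos hy] at h1
  rw [abs_of_pos hy] at h2
  have e1 : Real.exp (|t| * y) ≤ Real.exp ((|t| + 1) * y) := Real.exp_le_exp.2 (by nlinarith)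
  have e2 : Real.exp y ≤ Real.exp ((|t| + 1) * y) :=
    Real.exp_le_exp.2 (by nlinarith [abs_nonneg t])
  have : Real.exp (t * y) - 1 - (Real.exp y - 1) * t - (t ^ 2 - t) / 2 * y ^ 2
    = (Real.exp (t * y) - 1 - t * y - (t * y) ^ 2 / 2) - t * (Real.exp y - 1 - y - y ^ 2 / 2) := by
    ring
  rw [this]
  calc _ ≤ |Real.exp (t * y) - 1 - t * y - (t * y) ^ 2 / 2|
        + |t * (Real.exp y - 1 - y - y ^ 2 / 2)| := abs_sub _ _
    _ ≤ (|t| * y) ^ 3 * Real.exp ((|t| + 1) * y) + |t| * (y ^ 3 * Real.exp ((|t| + 1) * y)) := by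
        rw [abs_mul t]
        gcongr
        · exact h1.trans (by gcongr)
        · exact h2.trans (by gcongr)
    _ = _ := by ring

lemma int_aux (n : ℕ) (a : ℝ) (ha : 0 < a) :
    IntegrableOn (fun y : ℝ => y ^ n * Real.exp (-a * y)) (Set.Ioi 0) ∧
    ∫ y in Set.Ioi (0 : ℝ), y ^ n * Real.exp (-a * y) = n.factorial / a ^ (n + 1) := by
  have h := Real.integral_rpow_mul_exp_neg_mul_Ioi (a := n + 1) (r := a) (by positivity) ha
  have h2 := integrableOn_rpow_mul_exp_neg_mul_rpow (p := 1) (s := n) (b := a)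
    (by have : (0:ℝ) ≤ n := by positivity
        linarith) (by norm_num) ha
  constructor
  · simpa using h2
  · rw [Real.Gamma_nat_eq_factorial] at h
    simp only [add_sub_cancel_right, Real.rpow_natCast] at h
    simp only [neg_mul]
    rw [h, show ((n : ℝ) + 1) = ((n + 1 : ℕ) : ℝ) by push_cast; rfl, Real.rpow_natCast, one_div, inv_pow]
    field_simp

theorem stmt_19 (t : ℝ) :
    Filter.Tendsto
      (fun ν : ℝ => ν ^ 2 *
        ∫ y in Set.Ioi (0 : ℝ),
          (Real.exp (t * y) - 1 - (Real.exp y - 1) * t) * Real.exp (-ν * y) * y⁻¹)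
      Filter.atTop (nhds ((t ^ 2 - t) / 2)) := by
  set K : ℝ := |t| ^ 3 + |t| with hK
  have hK0 : 0 ≤ K := by positivity
  set c : ℝ := |t| + 1 with hc
  have hc0 : 0 < c := by positivity
  rw [tendsto_iff_norm_sub_tendsto_zero]
  have hlim : Filter.Tendsto (fun ν : ℝ => 16 * K * ν⁻¹) Filter.atTop (nhds 0) := by
    simpa using tendsto_inv_atTop_zero.const_mul (16 * K)
  refine squeeze_zero' (Filter.Eventually.of_forall fun _ => norm_nonneg _) ?_ hlim
  filter_upwards [Filter.eventually_ge_atTop (2 * c)] with ν hν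
  have hν0 : 0 < ν := by linarith
  have hd : 0 < ν - c := by linarith
  obtain ⟨i1, v1⟩ := int_aux 1 ν hν0
  obtain ⟨i2, v2⟩ := int_aux 2 (ν - c) hd
  set r : ℝ → ℝ := fun y => (Real.exp (t * y) - 1 - (Real.exp y - 1) * t
    - (t ^ 2 - t) / 2 * y ^ 2) * Real.exp (-ν * y) * y⁻¹ with hr
  have hb : ∀ᵐ y ∂(volume.restrict (Set.Ioi (0:ℝ))),
      ‖r y‖ ≤ K * (y ^ 2 * Real.exp (-(ν - c) * y)) := by
    refine (ae_restrict_iff' measurableSet_Ioi).2 (Filter.Eventually.of_forall fun y hy => ?_)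
    have hy : 0 < y := hy
    rw [hr, Real.norm_eq_abs, abs_mul, abs_mul, Real.abs_exp, abs_of_pos (inv_pos.2 hy)]
    calc _ ≤ (K * y ^ 3 * Real.exp (c * y)) * Real.exp (-ν * y) * y⁻¹ := by
          gcongr
          exact f_rem_aux t y hy
      _ = _ := by
          rw [show -(ν - c) * y = c * y + -ν * y by ring, Real.exp_add]
          field_simp
  have ib := i2.const_mul K
  have ir : IntegrableOn r (Set.Ioi 0) :=
    Integrable.mono' ib (by rw [hr]; exact Measurable.aestronglyMeasurable (by fun_prop)) hb
  have hI := norm_integral_le_of_norm_le ib hb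
  rw [integral_const_mul, v2] at hI
  have hs : ∫ y in Set.Ioi (0 : ℝ),
      (Real.exp (t * y) - 1 - (Real.exp y - 1) * t) * Real.exp (-ν * y) * y⁻¹
      = (t ^ 2 - t) / 2 * (1 / ν ^ 2) + ∫ y in Set.Ioi (0 : ℝ), r y := by
    have : (1 / ν ^ 2 : ℝ) = ∫ y in Set.Ioi (0 : ℝ), y ^ 1 * Real.exp (-ν * y) := by
      rw [v1]; norm_num
    rw [this, ← integral_const_mul, ← integral_add (i1.const_mul _) ir]
    refine setIntegral_congr_fun measurableSet_Ioi fun y hy => ?_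
    have hy : 0 < y := hy
    simp only [hr]
    field_simp
    ring
  rw [hs, show ν ^ 2 * ((t ^ 2 - t) / 2 * (1 / ν ^ 2) + ∫ y in Set.Ioi (0 : ℝ), r y)
    - (t ^ 2 - t) / 2 = ν ^ 2 * ∫ y in Set.Ioi (0 : ℝ), r y by field_simp; ring, norm_mul,
    Real.norm_of_nonneg (by positivity : 0 ≤ ν ^ 2)]
  calc _ ≤ ν ^ 2 * (K * ((Nat.factorial 2 : ℕ) / (ν - c) ^ (2 + 1))) := by gcongr
    _ ≤ ν ^ 2 * (K * ((Nat.factorial 2 : ℕ) / (ν / 2) ^ (2 + 1))) := by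
        gcongr
        linarith
    _ = 16 * K * ν⁻¹ := by
        simp [Nat.factorial]
        field_simp
        ring
end
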